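/- arXiv:2509.06416 — 3 statements merged into one kernel-verified Lean document; each statement's English description precedes it below -/
import Mathlib

section
/- Let (X, f_{1,∞}) be an NDS and n ∈ ℕ. Then (X, f_{1,∞}) is strongly multi-transitive if and only if its n-th iterate (X, f_{1,∞}^{[n]}) is strongly multi-transitive. -/
open Set Filter

section NDSDefs

variable {X : Type*}

/-- `nComp f i n` is the composition `f (i+n-1) ∘ ⋯ ∘ f (i+1) ∘ f i`.
Here `f` is the 0-indexed sequence of maps of the NDS (so `f 0` is the paper's `f₁`),
and `nComp f 0 n` is the paper's `f₁ⁿ`. -/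
def nComp (f : ℕ → X → X) (i : ℕ) : ℕ → X → X
  | 0 => id
  | n + 1 => f (i + n) ∘ nComp f i n

/-- The `k`-th iterate NDS `f^{[k]}`: its `n`-th map (0-indexed) is `f_{kn+1}^{k}`
in the paper's notation, i.e. the composition of `k` maps of `f` starting at index `k*n`. -/
def iterNDS (f : ℕ → X → X) (k : ℕ) : ℕ → X → X :=
  fun n => nComp f (k * n) k

/-- The product NDS `f^{[a]} = f^{[a 0]} × ⋯ × f^{[a (r-1)]}` on `Fin r → X`
for a vector `a : Fin r → ℕ`. -/
def vecIter (f : ℕ → X → X) {r : ℕ} (a : Fin r → ℕ) : ℕ → (Fin r → X) → Fin r → X :=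
  fun n x i => iterNDS f (a i) n (x i)

section Topo

variable [TopologicalSpace X]

/-- Topological transitivity of an NDS. -/
def NDSTransitive (f : ℕ → X → X) : Prop :=
  ∀ U V : Set X, IsOpen U → U.Nonempty → IsOpen V → V.Nonempty →
    ∃ n : ℕ, 1 ≤ n ∧ (nComp f 0 n '' U ∩ V).Nonempty

/-- Multi-transitivity of an NDS. -/
def MultiTransitive (f : ℕ → X → X) : Prop :=
  ∀ m : ℕ, 1 ≤ m → ∀ U V : Fin m → Set X,
    (∀ i, IsOpen (U i)) → (∀ i, (U i).Nonempty) →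
    (∀ i, IsOpen (V i)) → (∀ i, (V i).Nonempty) →
    ∃ l : ℕ, 1 ≤ l ∧ ∀ i : Fin m, (nComp f 0 ((i.1 + 1) * l) '' U i ∩ V i).Nonempty

/-- Multi-transitivity of an NDS with respect to a vector `a`. -/
def MultiTransWrt (f : ℕ → X → X) {p : ℕ} (a : Fin p → ℕ) : Prop :=
  ∀ U V : Fin p → Set X,
    (∀ i, IsOpen (U i)) → (∀ i, (U i).Nonempty) →
    (∀ i, IsOpen (V i)) → (∀ i, (V i).Nonempty) →
    ∃ l : ℕ, 1 ≤ l ∧ ∀ i : Fin p, (nComp f 0 (a i * l) '' U i ∩ V i).Nonempty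

/-- Strong multi-transitivity of an NDS: multi-transitivity with respect to every
vector of positive integers. -/
def StronglyMultiTransitive (f : ℕ → X → X) : Prop :=
  ∀ p : ℕ, 1 ≤ p → ∀ a : Fin p → ℕ, (∀ i, 1 ≤ a i) → MultiTransWrt f a

/-- Weak mixing of order `n` of an NDS. -/
def WeaklyMixingOfOrder (f : ℕ → X → X) (n : ℕ) : Prop :=
  ∀ U V : Fin n → Set X,
    (∀ i, IsOpen (U i)) → (∀ i, (U i).Nonempty) →
    (∀ i, IsOpen (V i)) → (∀ i, (V i).Nonempty) →
    ∃ m : ℕ, 1 ≤ m ∧ ∀ i : Fin n, (nComp f 0 m '' U i ∩ V i).Nonempty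

/-- Weak mixing of all orders of an NDS. -/
def WeaklyMixingAllOrders (f : ℕ → X → X) : Prop :=
  ∀ n : ℕ, 2 ≤ n → WeaklyMixingOfOrder f n

/-- Mild mixing of an NDS: the product with any transitive NDS (on a compact
metric space, with continuous maps) is transitive. -/
def MildlyMixing (f : ℕ → X → X) : Prop :=
  ∀ (Y : Type) [MetricSpace Y] [CompactSpace Y] (g : ℕ → Y → Y),
    (∀ n, Continuous (g n)) → NDSTransitive g →
      NDSTransitive (fun n (p : X × Y) => (f n p.1, g n p.2))

/-- Δ-transitivity of an NDS. -/
def DeltaTransitive (f : ℕ → X → X) : Prop :=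
  ∀ m : ℕ, 1 ≤ m → ∃ Y : Set X, Dense Y ∧ IsGδ Y ∧
    ∀ x ∈ Y, Dense {y : Fin m → X | ∃ n : ℕ, 1 ≤ n ∧ y = fun i => nComp f 0 ((i.1 + 1) * n) x}

/-- Δ-mixing of an NDS. -/
def DeltaMixing (f : ℕ → X → X) : Prop :=
  ∀ m : ℕ, 1 ≤ m → ∀ A : Set ℕ, A.Infinite → 0 ∉ A →
    ∃ Y : Set X, Dense Y ∧ IsGδ Y ∧
      ∀ x ∈ Y, Dense {y : Fin m → X | ∃ n ∈ A, y = fun i => nComp f 0 ((i.1 + 1) * n) x}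

/-- The set `N_{f_{1,∞}}(U,V)` of (positive) hitting times. -/
def hitTimes (f : ℕ → X → X) (U V : Set X) : Set ℕ :=
  {n : ℕ | 1 ≤ n ∧ (nComp f 0 n '' U ∩ V).Nonempty}

/-- A set of positive integers is syndetic if it has bounded gaps. -/
def Syndetic (A : Set ℕ) : Prop :=
  ∃ M : ℕ, ∀ i : ℕ, 1 ≤ i → ∃ j ∈ A, i ≤ j ∧ j ≤ i + M

/-- A set of positive integers is thick if it contains arbitrarily long runs. -/
def ThickSet (A : Set ℕ) : Prop :=
  ∀ p : ℕ, ∃ n : ℕ, 1 ≤ n ∧ ∀ j ≤ p, n + j ∈ A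

/-- A set of positive integers is thickly syndetic. -/
def ThicklySyndetic (A : Set ℕ) : Prop :=
  ∀ l : ℕ, Syndetic {m : ℕ | ∀ j ≤ l, m + j ∈ A}

/-- Thick transitivity of an NDS. -/
def ThicklyTransitive (f : ℕ → X → X) : Prop :=
  ∀ U V : Set X, IsOpen U → U.Nonempty → IsOpen V → V.Nonempty →
    ThickSet (hitTimes f U V)

/-- Thickly syndetic transitivity of an NDS. -/
def ThicklySyndeticallyTransitive (f : ℕ → X → X) : Prop :=
  ∀ U V : Set X, IsOpen U → U.Nonempty → IsOpen V → V.Nonempty →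
    ThicklySyndetic (hitTimes f U V)

/-- Total transitivity of an NDS: every iterate `f^{[n]}` is transitive. -/
def TotallyTransitive (f : ℕ → X → X) : Prop :=
  ∀ n : ℕ, 1 ≤ n → NDSTransitive (iterNDS f n)

/-- An NDS is feeble open if each map sends nonempty open sets to sets with
nonempty interior. -/
def FeebleOpen (f : ℕ → X → X) : Prop :=
  ∀ i : ℕ, ∀ U : Set X, IsOpen U → U.Nonempty → (interior (f i '' U)).Nonempty

/-- Strong multi-transitivity of an autonomous system `(X, g)`. -/
def ADSStronglyMultiTransitive (g : X → X) : Prop :=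
  ∀ m : ℕ, 1 ≤ m → ∀ a : Fin m → ℕ, (∀ j, 1 ≤ a j) →
    ∀ U V : Fin m → Set X,
      (∀ j, IsOpen (U j)) → (∀ j, (U j).Nonempty) →
      (∀ j, IsOpen (V j)) → (∀ j, (V j).Nonempty) →
      ∃ l : ℕ, 1 ≤ l ∧ ∀ j : Fin m, (g^[a j * l] '' U j ∩ V j).Nonempty

/-- Δ-transitivity of an autonomous system `(X, g)`. -/
def ADSDeltaTransitive (g : X → X) : Prop :=
  ∀ m : ℕ, 1 ≤ m → ∃ Y : Set X, Dense Y ∧ IsGδ Y ∧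
    ∀ x ∈ Y, Dense {y : Fin m → X | ∃ n : ℕ, 1 ≤ n ∧ y = fun i => g^[(i.1 + 1) * n] x}

/-- Thickly syndetic transitivity of an autonomous system `(X, g)`. -/
def ADSThicklySyndeticallyTransitive (g : X → X) : Prop :=
  ∀ U V : Set X, IsOpen U → U.Nonempty → IsOpen V → V.Nonempty →
    ThicklySyndetic {n : ℕ | 1 ≤ n ∧ (g^[n] '' U ∩ V).Nonempty}

end Topo

section MetricDefs

variable [MetricSpace X]

/-- The compositions `f_r^k` converge collectively to the iterates `g^k`. -/
def CollectiveConvergence (f : ℕ → X → X) (g : X → X) : Prop :=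
  ∀ ε : ℝ, 0 < ε → ∃ r₀ : ℕ, ∀ r ≥ r₀, ∀ k : ℕ, 1 ≤ k → ∀ x : X,
    dist (nComp f r k x) (g^[k] x) < ε

/-- Chain mixing of an NDS. -/
def NDSChainMixing (f : ℕ → X → X) : Prop :=
  ∀ x y : X, ∀ δ : ℝ, 0 < δ → ∃ N : ℕ, 1 ≤ N ∧ ∀ n ≥ N,
    ∃ c : ℕ → X, c 0 = x ∧ c n = y ∧ ∀ i < n, dist (f i (c i)) (c (i + 1)) < δ

/-- Chain transitivity of an NDS. -/
def NDSChainTransitive (f : ℕ → X → X) : Prop :=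
  ∀ x y : X, ∀ δ : ℝ, 0 < δ → ∃ n : ℕ, 1 ≤ n ∧
    ∃ c : ℕ → X, c 0 = x ∧ c n = y ∧ ∀ i < n, dist (f i (c i)) (c (i + 1)) < δ

/-- The shadowing property of an NDS. -/
def NDSShadowing (f : ℕ → X → X) : Prop :=
  ∀ ε : ℝ, 0 < ε → ∃ δ : ℝ, 0 < δ ∧ ∀ n : ℕ, ∀ c : ℕ → X,
    (∀ i < n, dist (f i (c i)) (c (i + 1)) < δ) →
      ∃ z : X, ∀ i ≤ n, dist (nComp f 0 i z) (c i) < ε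

end MetricDefs

end NDSDefs
theorem nComp_add_aux {X : Type*} (f : ℕ → X → X) (i m k : ℕ) :
    nComp f i (m + k) = nComp f (i + m) k ∘ nComp f i m := by
  induction k with
  | zero => rfl
  | succ k ih =>
    rw [← Nat.add_assoc]
    simp only [nComp]
    rw [ih, Nat.add_assoc]
    rfl

theorem nComp_iter_aux {X : Type*} (f : ℕ → X → X) (n m : ℕ) :
    nComp (iterNDS f n) 0 m = nComp f 0 (n * m) := by
  induction m with
  | zero => rfl
  | succ m ih =>
    rw [Nat.mul_succ, nComp_add_aux f 0 (n * m) n, ← ih]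
    simp only [nComp, iterNDS, Nat.zero_add]

/-- an NDS is strongly multi-transitive iff its `n`-th iterate is. -/
theorem stronglyMultiTransitive_iff_iterate {X : Type*} [MetricSpace X] [CompactSpace X]
    (f : ℕ → X → X) (hf : ∀ n, Continuous (f n)) (n : ℕ) (hn : 1 ≤ n) :
    StronglyMultiTransitive f ↔ StronglyMultiTransitive (iterNDS f n) := by
  constructor
  · intro h p hp a ha U V hU hU' hV hV'
    obtain ⟨l, hl, H⟩ := h p hp (fun i => n * a i)
      (fun i => Nat.mul_pos hn (ha i)) U V hU hU' hV hV'
    refine ⟨l, hl, fun i => ?_⟩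
    rw [nComp_iter_aux, ← Nat.mul_assoc]
    exact H i
  · intro h p hp a ha U V hU hU' hV hV'
    obtain ⟨l, hl, H⟩ := h p hp a ha U V hU hU' hV hV'
    refine ⟨n * l, Nat.mul_pos hn hl, fun i => ?_⟩
    have := H i
    rw [nComp_iter_aux, Nat.mul_left_comm] at this
    exact this
end

section
/- Let (X, f_{1,∞}) and (Y, g_{1,∞}) be NDS such that f_{1,∞} is topologically semi-conjugate to g_{1,∞} via a continuous surjection h : X → Y with g_n ∘ h = h ∘ f_n for every n ∈ ℕ. If f_{1,∞} is Δ-mixing, then g_{1,∞} is Δ-mixing. -/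
open Set Filter

theorem nComp_continuous_aux {Y : Type*} [TopologicalSpace Y] (g : ℕ → Y → Y)
    (hg : ∀ n, Continuous (g n)) (i n : ℕ) : Continuous (nComp g i n) := by
  induction n with
  | zero => exact continuous_id
  | succ k ih => exact (hg _).comp ih

theorem nComp_semiconj_aux {X Y : Type*} (f : ℕ → X → X) (g : ℕ → Y → Y) (h : X → Y)
    (hsemi : ∀ n : ℕ, ∀ x : X, g n (h x) = h (f n x)) (i n : ℕ) (x : X) :
    nComp g i n (h x) = h (nComp f i n x) := by
  induction n with
  | zero => rfl
  | succ k ih =>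
    change g (i + k) (nComp g i k (h x)) = h (f (i + k) (nComp f i k x))
    rw [ih, hsemi]

/-- Δ-mixing is preserved by topological semi-conjugacy. -/
theorem semiconj_deltaMixing {X : Type*} [MetricSpace X] [CompactSpace X]
    {Y : Type*} [MetricSpace Y] [CompactSpace Y]
    (f : ℕ → X → X) (hf : ∀ n, Continuous (f n))
    (g : ℕ → Y → Y) (hg : ∀ n, Continuous (g n))
    (h : X → Y) (hc : Continuous h) (hs : Function.Surjective h)
    (hsemi : ∀ n : ℕ, ∀ x : X, g n (h x) = h (f n x))
    (hfdm : DeltaMixing f) : DeltaMixing g := by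
  intro m hm A hA h0
  obtain ⟨D, hD, -, hDx⟩ := hfdm m hm A hA h0
  refine ⟨{x | Dense {y : Fin m → Y | ∃ n ∈ A, y = fun i => nComp g 0 ((i.1 + 1) * n) x}},
    ?_, ?_, fun x hx => hx⟩
  · refine (hs.denseRange.dense_image hc hD).mono ?_
    rintro _ ⟨x, hx, rfl⟩
    have hH : Continuous (fun (z : Fin m → X) (i : Fin m) => h (z i)) := by fun_prop
    have hHs : Function.Surjective (fun (z : Fin m → X) (i : Fin m) => h (z i)) := by
      intro y
      choose z hz using fun i => hs (y i)
      exact ⟨z, funext hz⟩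
    refine (hHs.denseRange.dense_image hH (hDx x hx)).mono ?_
    rintro _ ⟨_, ⟨n, hn, rfl⟩, rfl⟩
    exact ⟨n, hn, funext fun i => (nComp_semiconj_aux f g h hsemi 0 _ x).symm⟩
  · have hb := TopologicalSpace.isBasis_countableBasis (Fin m → Y)
    have heq : {x | Dense {y : Fin m → Y | ∃ n ∈ A, y = fun i => nComp g 0 ((i.1 + 1) * n) x}}
        = ⋂ U ∈ TopologicalSpace.countableBasis (Fin m → Y),
          ⋃ n ∈ A, (fun (x : Y) (i : Fin m) => nComp g 0 ((i.1 + 1) * n) x) ⁻¹' U := by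
      ext x
      simp only [mem_setOf_eq, mem_iInter, mem_iUnion, mem_preimage]
      rw [hb.dense_iff]
      constructor
      · intro H U hU
        obtain ⟨_, hy, n, hn, rfl⟩ :=
          H U hU (TopologicalSpace.nonempty_of_mem_countableBasis hU)
        exact ⟨n, hn, hy⟩
      · intro H U hU _
        obtain ⟨n, hn, hy⟩ := H U hU
        exact ⟨_, hy, n, hn, rfl⟩
    rw [heq]
    refine IsGδ.biInter (TopologicalSpace.countable_countableBasis _) fun U hU => ?_
    refine IsOpen.isGδ (isOpen_biUnion fun n _ => ?_)
    refine (TopologicalSpace.isOpen_of_mem_countableBasis hU).preimage ?_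
    exact continuous_pi fun i => nComp_continuous_aux g hg 0 _
end

section
/- Let (X, f_{1,∞}) be an NDS with f_{1,∞} feeble open and converging uniformly to a continuous map f : X → X, and suppose the compositions (f_r^k) converge collectively to the iterates (f^k). Then f_{1,∞} is strongly multi-transitive if and only if f is strongly multi-transitive (i.e., for every m ∈ ℕ, every a = (a_1,…,a_m) ∈ ℕ^m and all nonempty open U_1,…,U_m, V_1,…,V_m ⊆ X there exists l ∈ ℕ with f^{a_j l}(U_j) ∩ V_j ≠ ∅ for every j). -/
open Set Filter

theorem nComp_add_apply {X : Type*} (f : ℕ → X → X) (i m n : ℕ) (x : X) :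
    nComp f i (m + n) x = nComp f (i + m) n (nComp f i m x) := by
  induction n with
  | zero => rfl
  | succ n ih =>
    rw [← Nat.add_assoc]
    simp only [nComp, Function.comp_apply, ih, Nat.add_assoc]

theorem nComp_continuous {X : Type*} [TopologicalSpace X] (f : ℕ → X → X)
    (hf : ∀ n, Continuous (f n)) (i n : ℕ) : Continuous (nComp f i n) := by
  induction n with
  | zero => exact continuous_id
  | succ n ih => exact (hf _).comp ih

theorem nComp_feeble {X : Type*} [TopologicalSpace X] (f : ℕ → X → X)
    (hfo : FeebleOpen f) (i n : ℕ) (U : Set X) (hU : IsOpen U) (hne : U.Nonempty) :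
    (interior (nComp f i n '' U)).Nonempty := by
  induction n with
  | zero => simpa [nComp, hU.interior_eq] using hne
  | succ n ih =>
    refine (hfo (i + n) _ isOpen_interior ih).mono (interior_mono ?_)
    simp only [nComp, Set.image_comp]
    exact Set.image_mono interior_subset

theorem exists_common_radius {X : Type*} [MetricSpace X] {m : ℕ} (V : Fin m → Set X)
    (hV : ∀ i, IsOpen (V i)) (y : Fin m → X) (hy : ∀ i, y i ∈ V i) :
    ∃ ε : ℝ, 0 < ε ∧ ∀ i, Metric.ball (y i) ε ⊆ V i := by
  choose e he hb using fun i => Metric.isOpen_iff.1 (hV i) (y i) (hy i)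
  rcases isEmpty_or_nonempty (Fin m) with h | h
  · exact ⟨1, one_pos, fun i => h.elim i⟩
  · obtain ⟨i₀, h₀⟩ := Finite.exists_min e
    exact ⟨e i₀, he i₀, fun i => (Metric.ball_subset_ball (h₀ i)).trans (hb i)⟩

/-- under feeble openness, uniform convergence and collective convergence,
an NDS is strongly multi-transitive iff the limit map is. -/
theorem stronglyMultiTransitive_iff_limit {X : Type*} [MetricSpace X] [CompactSpace X]
    (f : ℕ → X → X) (hf : ∀ n, Continuous (f n))
    (flim : X → X) (hflim : Continuous flim)
    (hfo : FeebleOpen f)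
    (hunif : TendstoUniformly f flim Filter.atTop)
    (hcoll : CollectiveConvergence f flim) :
    StronglyMultiTransitive f ↔ ADSStronglyMultiTransitive flim := by
  constructor
  · intro h m hm a ha U V hU hUne hV hVne
    choose y hy using hVne
    obtain ⟨ε, hε, hball⟩ := exists_common_radius V hV y hy
    obtain ⟨r, hr⟩ := hcoll (ε / 2) (half_pos hε)
    obtain ⟨l₁, hl₁, h₁⟩ := h m hm (fun i => a i * (r + 1))
      (fun i => Nat.mul_pos (ha i) r.succ_pos) (fun _ => Set.univ) U (fun _ => isOpen_univ)
      (fun i => (hUne i).mono (Set.subset_univ _)) hU hUne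
    obtain ⟨L, hL⟩ : ∃ L, L = (r + 1) * l₁ := ⟨_, rfl⟩
    have hrL : r ≤ L := by rw [hL]; nlinarith
    obtain ⟨l₂, hl₂, h₂⟩ := h m hm (fun i => a i * (L + 1))
      (fun i => Nat.mul_pos (ha i) L.succ_pos) (fun i => nComp f 0 (a i * L) ⁻¹' U i)
      (fun i => Metric.ball (y i) (ε / 2))
      (fun i => (hU i).preimage (nComp_continuous f hf _ _))
      (fun i => by
        obtain ⟨_, ⟨x, -, rfl⟩, hx⟩ := h₁ i
        refine ⟨x, ?_⟩
        rw [hL, ← Nat.mul_assoc]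
        exact hx)
      (fun i => Metric.isOpen_ball) (fun i => ⟨y i, Metric.mem_ball_self (half_pos hε)⟩)
    obtain ⟨k, hk⟩ : ∃ k, (L + 1) * l₂ = L + (k + 1) :=
      ⟨(L + 1) * l₂ - (L + 1), by have : L + 1 ≤ (L + 1) * l₂ := by nlinarith
                                  omega⟩
    refine ⟨k + 1, Nat.succ_pos _, fun i => ?_⟩
    obtain ⟨_, ⟨w, hw, rfl⟩, hx⟩ := h₂ i
    refine ⟨_, ⟨_, hw, rfl⟩, hball i ?_⟩
    simp only [Nat.mul_assoc, hk] at hx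
    rw [Nat.mul_add, nComp_add_apply, Nat.zero_add, Metric.mem_ball] at hx
    have := hr (a i * L) (hrL.trans (Nat.le_mul_of_pos_left _ (ha i))) (a i * (k + 1))
      (Nat.mul_pos (ha i) k.succ_pos) (nComp f 0 (a i * L) w)
    rw [dist_comm] at this
    rw [Metric.mem_ball]
    linarith [dist_triangle (flim^[a i * (k + 1)] (nComp f 0 (a i * L) w))
      (nComp f (a i * L) (a i * (k + 1)) (nComp f 0 (a i * L) w)) (y i)]
  · intro h m hm a ha U V hU hUne hV hVne
    choose y hy using hVne
    obtain ⟨ε, hε, hball⟩ := exists_common_radius V hV y hy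
    obtain ⟨r, hr⟩ := hcoll (ε / 2) (half_pos hε)
    obtain ⟨l, hl, h₁⟩ := h m hm a ha (fun i => interior (nComp f 0 (a i * r) '' U i))
      (fun i => Metric.ball (y i) (ε / 2)) (fun i => isOpen_interior)
      (fun i => nComp_feeble f hfo _ _ _ (hU i) (hUne i))
      (fun i => Metric.isOpen_ball) (fun i => ⟨y i, Metric.mem_ball_self (half_pos hε)⟩)
    refine ⟨r + l, by omega, fun i => ?_⟩
    obtain ⟨_, ⟨z, hz, rfl⟩, hx⟩ := h₁ i
    obtain ⟨w, hw, rfl⟩ := interior_subset hz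
    refine ⟨_, ⟨w, hw, rfl⟩, hball i ?_⟩
    rw [Nat.mul_add, nComp_add_apply, Nat.zero_add]
    rw [Metric.mem_ball] at hx ⊢
    have := hr (a i * r) (Nat.le_mul_of_pos_left _ (ha i)) (a i * l)
      (Nat.mul_pos (ha i) hl) (nComp f 0 (a i * r) w)
    linarith [dist_triangle (nComp f (a i * r) (a i * l) (nComp f 0 (a i * r) w))
      (flim^[a i * l] (nComp f 0 (a i * r) w)) (y i)]
end
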